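/- Let S be a measurable space, let G and F be disjoint measurable subsets of S, and let μ be a probability measure on the trajectory space ℕ → S (with the product σ-algebra) such that μ-almost every trajectory s satisfies s 0 ∉ G ∪ F. With τ_G, τ_F, τ and the return R defined pathwise as usual, the expected return equals the reach–avoid success probability: ∫ R dμ = μ{s : τ_G(s) < τ_F(s)}. In particular, the value function defined as the expected undiscounted return equals the probability of reaching G before F. -/

import Mathlib

/-!
A reward is earned at a time `t < τ` exactly when `t + 1` is the first visit to `G` and `F` has
not been visited up to time `t + 1` (at time `t + 1` itself because `G` and `F` are disjoint).
For a trajectory that starts outside `G ∪ F`, the first visit to `G` does have the form `t + 1`,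
so the return is the indicator of `{τ_G < τ_F}` (`reachAvoidReturn_eq_indicator`), and
integrating this identity gives the theorem. Measurability of the event comes from its
description by countably many coordinate conditions (`hitTime_lt_hitTime_iff`).
-/

open scoped ENNReal
open MeasureTheory

/-- The hitting time of the set `A` by the trajectory `s`, with value `∞` (in `ℕ∞`)
if `A` is never visited. -/
noncomputable def hitTime {S : Type*} (A : Set S) (s : ℕ → S) : ℕ∞ :=
  ⨅ t ∈ {t : ℕ | s t ∈ A}, (t : ℕ∞)

/-- The undiscounted return: the sum over all times `t` before the first-exit time
`τ = min (hitTime G s) (hitTime F s)` of the sparse entrance reward `1{s (t+1) ∈ G}`,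
interpreted as a possibly infinite sum of indicators when `τ = ∞`. -/
noncomputable def reachAvoidReturn {S : Type*} (G F : Set S) (s : ℕ → S) : ℝ≥0∞ :=
  ∑' t : ℕ,
    Set.indicator {t : ℕ | (t : ℕ∞) < min (hitTime G s) (hitTime F s) ∧ s (t + 1) ∈ G}
      (fun _ => (1 : ℝ≥0∞)) t

lemma lt_hitTime_iff {S : Type*} (A : Set S) (s : ℕ → S) (t : ℕ) :
    (t : ℕ∞) < hitTime A s ↔ ∀ k ≤ t, s k ∉ A := by
  rw [← not_iff_not, not_lt, ← ENat.lt_natCast_add_one_iff]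
  simp only [hitTime, iInf_lt_iff, Set.mem_ofPred_eq, not_forall, not_not]
  constructor
  · rintro ⟨k, hk, hlt⟩
    exact ⟨k, by rw [ENat.lt_natCast_add_one_iff] at hlt; exact_mod_cast hlt, hk⟩
  · rintro ⟨k, hle, hk⟩
    exact ⟨k, hk, by rw [ENat.lt_natCast_add_one_iff]; exact_mod_cast hle⟩

lemma hitTime_lt_hitTime_iff {S : Type*} (G F : Set S) (s : ℕ → S) :
    hitTime G s < hitTime F s ↔ ∃ n, s n ∈ G ∧ ∀ k ≤ n, s k ∉ F := by
  constructor
  · intro h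
    have h' := h
    rw [hitTime] at h'
    simp only [iInf_lt_iff, Set.mem_ofPred_eq] at h'
    obtain ⟨n, hn, hlt⟩ := h'
    exact ⟨n, hn, (lt_hitTime_iff F s n).1 hlt⟩
  · rintro ⟨n, hn, hF⟩
    exact (iInf₂_le n hn).trans_lt ((lt_hitTime_iff F s n).2 hF)

lemma measurableSet_hitTime_lt {S : Type*} [MeasurableSpace S] {G F : Set S}
    (hG : MeasurableSet G) (hF : MeasurableSet F) :
    MeasurableSet {s : ℕ → S | hitTime G s < hitTime F s} := by
  simp only [hitTime_lt_hitTime_iff, Set.ofPred_exists, Set.ofPred_and, Set.ofPred_forall]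
  exact MeasurableSet.iUnion fun n => (measurable_pi_apply n hG).inter <|
    MeasurableSet.iInter fun k => MeasurableSet.iInter fun _ =>
      (measurable_pi_apply k hF).compl

/-- Along a trajectory starting outside `G ∪ F`, at most one reward is collected, and one is
collected precisely when `G` is reached before `F`. -/
lemma reachAvoidReturn_eq_indicator {S : Type*} {G F : Set S} (hGF : Disjoint G F)
    {s : ℕ → S} (h0 : s 0 ∉ G ∪ F) :
    reachAvoidReturn G F s =
      Set.indicator {s : ℕ → S | hitTime G s < hitTime F s} 1 s := by
  classical
  unfold reachAvoidReturn
  simp only [lt_min_iff, lt_hitTime_iff]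
  by_cases h : hitTime G s < hitTime F s
  · rw [Set.indicator_of_mem (by exact h)]
    obtain ⟨n, hnG, hnF⟩ := (hitTime_lt_hitTime_iff G F s).1 h
    have hex : ∃ n, s n ∈ G := ⟨n, hnG⟩
    -- The first visit to `G` happens at a positive time `m + 1`, so the reward comes at `m`.
    obtain ⟨m, hm⟩ : ∃ m, Nat.find hex = m + 1 := by
      refine Nat.exists_eq_succ_of_ne_zero fun hz => h0 (Or.inl ?_)
      simpa [hz] using Nat.find_spec hex
    have hmG : s (m + 1) ∈ G := hm ▸ Nat.find_spec hex
    have hmin : ∀ k ≤ m, s k ∉ G := fun k hk => Nat.find_min hex (by omega)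
    have hmn : m + 1 ≤ n := hm ▸ Nat.find_min' hex hnG
    rw [tsum_eq_single m]
    · refine Set.indicator_of_mem ?_ _
      exact ⟨⟨hmin, fun k hk => hnF k (by omega)⟩, hmG⟩
    · intro t ht
      refine Set.indicator_of_notMem ?_ _
      rintro ⟨⟨htG, -⟩, htG'⟩
      rcases lt_or_gt_of_ne ht with hlt | hlt
      · exact hmin (t + 1) (by omega) htG'
      · exact htG (m + 1) (by omega) hmG
  · rw [Set.indicator_of_notMem (by exact h), ENNReal.tsum_eq_zero]
    intro t
    refine Set.indicator_of_notMem ?_ _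
    rintro ⟨⟨-, htF⟩, htG⟩
    refine h ((hitTime_lt_hitTime_iff G F s).2 ⟨t + 1, htG, fun k hk => ?_⟩)
    rcases Nat.le_succ_iff.1 hk with hk | rfl
    · exact htF k hk
    · exact Set.disjoint_left.1 hGF htG

/-- For any probability measure `μ` on trajectory space (with the product σ-algebra)
under which almost every trajectory starts outside `G ∪ F`, the expected undiscounted
return equals the reach–avoid success probability `μ {s | τ_G(s) < τ_F(s)}`. -/
theorem expected_return_eq_reachAvoid_prob {S : Type*} [MeasurableSpace S]
    (G F : Set S) (hG : MeasurableSet G) (hF : MeasurableSet F) (hGF : Disjoint G F)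
    (μ : Measure (ℕ → S)) [IsProbabilityMeasure μ]
    (h0 : ∀ᵐ s ∂μ, s 0 ∉ G ∪ F) :
    ∫⁻ s, reachAvoidReturn G F s ∂μ = μ {s : ℕ → S | hitTime G s < hitTime F s} := by
  rw [← lintegral_indicator_one (measurableSet_hitTime_lt hG hF)]
  exact lintegral_congr_ae (h0.mono fun s hs => reachAvoidReturn_eq_indicator hGF hs)
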